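/- Under the null hypothesis, for any c ∈ [0,1], letting q_c := P(M_n^+ ≤ c), the two-sided statistic satisfies 2q_c - q_c² ≤ P(M_n ≤ c) ≤ 2q_c. -/

import Mathlib

open MeasureTheory Filter Set

noncomputable section

/-- Density of the Beta(a,b) distribution on [0,1]. -/
def betaPDF (a b x : ℝ) : ℝ :=
  x ^ (a - 1) * (1 - x) ^ (b - 1) / (Real.Gamma a * Real.Gamma b / Real.Gamma (a + b))

/-- Regularized incomplete beta function `I_x(a,b) = P(Beta(a,b) < x)`. -/
def regIncBeta (a b x : ℝ) : ℝ := ∫ t in Set.Ioc (0:ℝ) x, betaPDF a b t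

/-- The `i`-th order statistic (0-based) of the sample `u`. -/
def orderStat {n : ℕ} (u : Fin n → ℝ) (i : Fin n) : ℝ := u (Tuple.sort u i)

/-- `p_{(i)} = P(Beta(i, n-i+1) < u_{(i)})` (with 1-based index `i = (i : Fin n) + 1`). -/
def pOrd {n : ℕ} (u : Fin n → ℝ) (i : Fin n) : ℝ :=
  regIncBeta ((i : ℕ) + 1 : ℝ) ((n : ℝ) - (i : ℕ)) (orderStat u i)

/-- One-sided exact Berk-Jones statistic `M_n^+`. -/
def MnPlus {n : ℕ} (u : Fin n → ℝ) : ℝ := ⨅ i, pOrd u i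

/-- One-sided exact Berk-Jones statistic `M_n^-`. -/
def MnMinus {n : ℕ} (u : Fin n → ℝ) : ℝ := ⨅ i, (1 - pOrd u i)

/-- Two-sided exact Berk-Jones statistic `M_n`. -/
def Mn {n : ℕ} (u : Fin n → ℝ) : ℝ := min (MnPlus u) (MnMinus u)

/-- Joint law of `n` i.i.d. `U[0,1]` random variables (the null hypothesis). -/
def nullMeasure (n : ℕ) : Measure (Fin n → ℝ) :=
  Measure.pi fun _ => MeasureTheory.volume.restrict (Set.Icc (0:ℝ) 1)

end

/-!
`M_n⁺` is a nondecreasing function of the sample, and `M_n⁻` is `M_n⁺` evaluated at the reflected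
sample `1 - U`, by the symmetry `I_{1-x}(b, a) = 1 - I_x(a, b)` of the incomplete beta function.
The reflection preserves the null law, so `{M_n⁺ ≤ c}` and `{M_n⁻ ≤ c}` have the same probability
`q_c`, and the upper bound is the union bound. The first event is a lower set and the second an
upper set of the cube; by Harris' inequality for product measures they are negatively correlated,
so their intersection has probability at most `q_c ^ 2`, which is the lower bound.
-/

open unitInterval
open scoped ENNReal Finset

/-- Positive association of a law `μ` on a preordered space (Esary, Proschan and Walkup):
nondecreasing functions are nonnegatively correlated. Taking the functions with values in `ℝ≥0∞`
dispenses with integrability conditions. -/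
def PositivelyAssociated {α : Type*} [MeasurableSpace α] [Preorder α] (μ : Measure α) : Prop :=
  ∀ ⦃f g : α → ℝ≥0∞⦄, Measurable f → Measurable g → Monotone f → Monotone g →
    (∫⁻ x, f x ∂μ) * ∫⁻ x, g x ∂μ ≤ ∫⁻ x, f x * g x ∂μ

namespace PositivelyAssociated

section Construction

variable {α β : Type*} [MeasurableSpace α] [MeasurableSpace β] [Preorder α] [Preorder β]

theorem of_total [@Std.Total α (· ≤ ·)] (μ : Measure α) [IsProbabilityMeasure μ] :
    PositivelyAssociated μ := by
  intro f g hf hg hf_mono hg_mono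
  have rearrangement_of_le {x y : α} (hxy : x ≤ y) :
      f x * g y + g x * f y ≤ f x * g x + f y * g y := by
    obtain ⟨a, ha⟩ := exists_add_of_le (hf_mono hxy)
    calc f x * g y + g x * f y = f x * g y + f x * g x + a * g x := by rw [ha]; ring
      _ ≤ f x * g y + f x * g x + a * g y := by gcongr; exact hg_mono hxy
      _ = f x * g x + f y * g y := by rw [ha]; ring
  have rearrangement (x y : α) : f x * g y + g x * f y ≤ f x * g x + f y * g y := by
    obtain hxy | hyx := Std.Total.total (r := (· ≤ ·)) x y
    · exact rearrangement_of_le hxy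
    · calc f x * g y + g x * f y = f y * g x + g y * f x := by ring
        _ ≤ f y * g y + f x * g x := rearrangement_of_le hyx
        _ = f x * g x + f y * g y := add_comm _ _
  have integrated : 2 * ((∫⁻ x, f x ∂μ) * ∫⁻ x, g x ∂μ) ≤ 2 * ∫⁻ x, f x * g x ∂μ :=
    calc 2 * ((∫⁻ x, f x ∂μ) * ∫⁻ x, g x ∂μ)
        = ∫⁻ x, ∫⁻ y, f x * g y + g x * f y ∂μ ∂μ := by
          simp (disch := fun_prop) only [lintegral_add_left, lintegral_const_mul,
            lintegral_mul_const]
          ring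
      _ ≤ ∫⁻ x, ∫⁻ y, f x * g x + f y * g y ∂μ ∂μ :=
          lintegral_mono fun x ↦ lintegral_mono fun y ↦ rearrangement x y
      _ = 2 * ∫⁻ x, f x * g x ∂μ := by
          simp (disch := fun_prop) only [lintegral_add_left, lintegral_const, measure_univ,
            mul_one, two_mul]
  exact (ENNReal.mul_le_mul_iff_right two_ne_zero ENNReal.ofNat_ne_top).1 integrated

theorem map {μ : Measure α} (hμ : PositivelyAssociated μ) {φ : α → β} (hφ : Measurable φ)
    (hφ_mono : Monotone φ) : PositivelyAssociated (μ.map φ) := by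
  intro f g hf hg hf_mono hg_mono
  rw [lintegral_map hf hφ, lintegral_map hg hφ,
    lintegral_map (f := fun x ↦ f x * g x) (hf.mul hg) hφ]
  exact hμ (hf.comp hφ) (hg.comp hφ) (hf_mono.comp hφ_mono) (hg_mono.comp hφ_mono)

theorem prod {μ : Measure α} {ν : Measure β} [SFinite ν] (hμ : PositivelyAssociated μ)
    (hν : PositivelyAssociated ν) : PositivelyAssociated (μ.prod ν) := by
  intro f g hf hg hf_mono hg_mono
  have integral_section_mono {h : α × β → ℝ≥0∞} (hh : Monotone h) :
      Monotone fun x ↦ ∫⁻ y, h (x, y) ∂ν :=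
    fun _ _ hx ↦ lintegral_mono fun _ ↦ hh (Prod.mk_le_mk.2 ⟨hx, le_rfl⟩)
  have prodMk_mono (x : α) : Monotone (Prod.mk x : β → α × β) :=
    fun _ _ hy ↦ Prod.mk_le_mk.2 ⟨le_rfl, hy⟩
  rw [lintegral_prod f hf.aemeasurable, lintegral_prod g hg.aemeasurable,
    lintegral_prod (fun p ↦ f p * g p) (hf.mul hg).aemeasurable]
  calc (∫⁻ x, ∫⁻ y, f (x, y) ∂ν ∂μ) * ∫⁻ x, ∫⁻ y, g (x, y) ∂ν ∂μ
      ≤ ∫⁻ x, (∫⁻ y, f (x, y) ∂ν) * ∫⁻ y, g (x, y) ∂ν ∂μ :=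
        hμ hf.lintegral_prod_right' hg.lintegral_prod_right'
          (integral_section_mono hf_mono) (integral_section_mono hg_mono)
    _ ≤ ∫⁻ x, ∫⁻ y, f (x, y) * g (x, y) ∂ν ∂μ :=
        lintegral_mono fun x ↦ hν (hf.comp measurable_prodMk_left)
          (hg.comp measurable_prodMk_left) (hf_mono.comp (prodMk_mono x))
          (hg_mono.comp (prodMk_mono x))

theorem pi {n : ℕ} {α : Fin n → Type*} [∀ i, MeasurableSpace (α i)] [∀ i, Preorder (α i)]
    {μ : ∀ i, Measure (α i)} [∀ i, IsProbabilityMeasure (μ i)]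
    (hμ : ∀ i, PositivelyAssociated (μ i)) : PositivelyAssociated (Measure.pi μ) := by
  induction n with
  | zero =>
    have : @Std.Total (∀ i, α i) (· ≤ ·) := ⟨fun x y ↦ .inl (Subsingleton.elim x y).le⟩
    exact of_total _
  | succ n ih =>
    have consPreserving := (measurePreserving_piFinSuccAbove μ 0).symm
    rw [← consPreserving.map_eq]
    refine ((hμ 0).prod (ih fun i ↦ hμ _)).map consPreserving.measurable ?_
    intro x y hxy
    exact (Fin.insertNthOrderIso α 0).monotone hxy

end Construction

section Events

variable {α : Type*} [MeasurableSpace α] [Preorder α] {μ : Measure α} {A B : Set α}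

theorem measure_mul_le_measure_inter (hμ : PositivelyAssociated μ) (hA : MeasurableSet A)
    (hB : MeasurableSet B) (hA_upper : IsUpperSet A) (hB_upper : IsUpperSet B) :
    μ A * μ B ≤ μ (A ∩ B) := by
  have indicator_mono {C : Set α} (hC : IsUpperSet C) : Monotone (C.indicator (1 : α → ℝ≥0∞)) :=
    fun x y hxy ↦ by
      by_cases hx : x ∈ C
      · simp [hx, hC hxy hx]
      · simp [hx]
  have correlation := hμ (measurable_one.indicator hA) (measurable_one.indicator hB)
    (indicator_mono hA_upper) (indicator_mono hB_upper)
  rw [lintegral_indicator_one hA, lintegral_indicator_one hB] at correlation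
  calc μ A * μ B ≤ ∫⁻ x, (A.indicator 1 * B.indicator 1 : α → ℝ≥0∞) x ∂μ := correlation
    _ = μ (A ∩ B) := by rw [← inter_indicator_one, lintegral_indicator_one (hA.inter hB)]

variable [IsProbabilityMeasure μ]

theorem add_sub_mul_le_measureReal_union (hμ : PositivelyAssociated μ) (hA : MeasurableSet A)
    (hB : MeasurableSet B) (hA_lower : IsLowerSet A) (hB_upper : IsUpperSet B) :
    μ.real A + μ.real B - μ.real A * μ.real B ≤ μ.real (A ∪ B) := by
  have correlation : μ.real Aᶜ * μ.real B ≤ μ.real (Aᶜ ∩ B) := by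
    simpa only [measureReal_def, ENNReal.toReal_mul] using ENNReal.toReal_mono
      (measure_ne_top μ _) (hμ.measure_mul_le_measure_inter hA.compl hB hA_lower.compl hB_upper)
  calc μ.real A + μ.real B - μ.real A * μ.real B = μ.real A + μ.real Aᶜ * μ.real B := by
        rw [probReal_compl_eq_one_sub hA]; ring
    _ ≤ μ.real A + μ.real (B \ A) := by
        rw [sdiff_eq, inter_comm]; gcongr
    _ = μ.real (A ∪ B) := by
        rw [← measureReal_union disjoint_sdiff_right (hB.diff hA), union_sdiff_self]

theorem two_mul_sub_sq_le_measureReal_union_preimage (hμ : PositivelyAssociated μ) {T : α → α}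
    (hT : MeasurePreserving T μ μ) (hT_anti : Antitone T) (hA : MeasurableSet A)
    (hA_lower : IsLowerSet A) : 2 * μ.real A - μ.real A ^ 2 ≤ μ.real (A ∪ T ⁻¹' A) := by
  have preimage_upper : IsUpperSet (T ⁻¹' A) := fun _ _ hxy hx ↦ hA_lower (hT_anti hxy) hx
  have union_bound :=
    hμ.add_sub_mul_le_measureReal_union hA (hT.measurable hA) hA_lower preimage_upper
  rw [hT.measureReal_preimage hA.nullMeasurableSet] at union_bound
  linarith

end Events

end PositivelyAssociated

section OrderStatistics

variable {n : ℕ}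

theorem orderStat_le_iff {u : Fin n → ℝ} {i : Fin n} {t : ℝ} :
    orderStat u i ≤ t ↔ (i : ℕ) < #{j | u j ≤ t} := by
  have card_eq : #{j | (u ∘ Tuple.sort u) j ≤ t} = #{j | u j ≤ t} :=
    Finset.card_equiv (Tuple.sort u) (by simp)
  rw [← card_eq, Tuple.lt_card_le_iff_apply_le_of_monotone (Tuple.monotone_sort u)]
  rfl

theorem orderStat_mono (i : Fin n) : Monotone fun u : Fin n → ℝ ↦ orderStat u i := by
  intro u v huv
  have count_le : #{j | v j ≤ orderStat v i} ≤ #{j | u j ≤ orderStat v i} :=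
    Finset.card_le_card <| Finset.monotone_filter_right _ fun j _ hj ↦ (huv j).trans hj
  exact orderStat_le_iff.2 ((orderStat_le_iff.1 le_rfl).trans_le count_le)

theorem measurable_orderStat (i : Fin n) : Measurable fun u : Fin n → ℝ ↦ orderStat u i := by
  refine measurable_of_Iic fun t ↦ ?_
  have preimage_eq : (fun u : Fin n → ℝ ↦ orderStat u i) ⁻¹' Iic t =
      {u | (i : ℕ) < ∑ j, if u j ≤ t then 1 else 0} := by
    ext u
    simp only [mem_preimage, mem_Iic, orderStat_le_iff, Finset.card_filter, mem_ofPred_eq]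
  rw [preimage_eq]
  exact measurableSet_lt measurable_const <| Finset.measurable_sum _ fun j _ ↦
    Measurable.ite (measurableSet_le (measurable_pi_apply j) measurable_const)
      measurable_const measurable_const

theorem orderStat_comp_antitone {φ : ℝ → ℝ} (hφ : Antitone φ) (u : Fin n → ℝ) (i : Fin n) :
    orderStat (φ ∘ u) i = φ (orderStat u i.rev) := by
  have sorted : Monotone ((φ ∘ u) ∘ Fin.revPerm.trans (Tuple.sort u)) :=
    hφ.comp ((Tuple.monotone_sort u).comp_antitone Fin.rev_anti)
  exact (congrFun (Tuple.comp_sort_eq_comp_iff_monotone.2 sorted) i).symm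

end OrderStatistics

section RegularizedIncompleteBeta

theorem betaPDF_nonneg {a b x : ℝ} (ha : 0 < a) (hb : 0 < b) (hx : x ∈ Icc (0 : ℝ) 1) :
    0 ≤ betaPDF a b x :=
  div_nonneg (mul_nonneg (Real.rpow_nonneg hx.1 _) (Real.rpow_nonneg (sub_nonneg.2 hx.2) _))
    (ProbabilityTheory.beta_pos ha hb).le

theorem betaPDF_one_sub (a b x : ℝ) : betaPDF a b (1 - x) = betaPDF b a x := by
  simp only [betaPDF, sub_sub_cancel, add_comm a b, mul_comm]

theorem measurable_betaPDF (a b : ℝ) : Measurable (betaPDF a b) := by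
  unfold betaPDF
  fun_prop

theorem measurable_regIncBeta (a b : ℝ) : Measurable (regIncBeta a b) := by
  have integrand_measurable :
      Measurable fun p : ℝ × ℝ ↦ (Ioc 0 p.1).indicator (betaPDF a b) p.2 :=
    Measurable.ite ((measurableSet_lt measurable_const measurable_snd).inter
      (measurableSet_le measurable_snd measurable_fst))
      ((measurable_betaPDF a b).comp measurable_snd) measurable_const
  have regIncBeta_eq : regIncBeta a b = fun x ↦ ∫ t, (Ioc 0 x).indicator (betaPDF a b) t :=
    funext fun _ ↦ (integral_indicator measurableSet_Ioc).symm
  rw [regIncBeta_eq]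
  exact integrand_measurable.stronglyMeasurable.integral_prod_right'.measurable

variable {a b : ℝ} (ha : 0 < a) (hb : 0 < b)
include ha hb

theorem regIncBeta_one : regIncBeta a b 1 = 1 := by
  rw [regIncBeta, integral_Ioc_eq_integral_Ioo, integral_eq_lintegral_of_nonneg_ae
    (ae_restrict_of_forall_mem measurableSet_Ioo fun x hx ↦
      betaPDF_nonneg ha hb (Ioo_subset_Icc_self hx)) (measurable_betaPDF a b).aestronglyMeasurable,
    ENNReal.toReal_eq_one_iff, ← ProbabilityTheory.lintegral_betaPDF_eq_one ha hb,
    ProbabilityTheory.lintegral_betaPDF]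
  refine lintegral_congr fun x ↦ congrArg ENNReal.ofReal ?_
  rw [betaPDF, ProbabilityTheory.beta]
  ring

theorem integrableOn_betaPDF : IntegrableOn (betaPDF a b) (Ioc 0 1) :=
  integrable_of_integral_eq_one (regIncBeta_one ha hb)

theorem regIncBeta_monotoneOn : MonotoneOn (regIncBeta a b) (Iic 1) := by
  intro x _ y hy hxy
  refine setIntegral_mono_set
    ((integrableOn_betaPDF ha hb).mono_set (Ioc_subset_Ioc_right hy)) ?_
    (Ioc_subset_Ioc_right hxy).eventuallyLE
  exact ae_restrict_of_forall_mem measurableSet_Ioc fun t ht ↦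
    betaPDF_nonneg ha hb ⟨ht.1.le, ht.2.trans hy⟩

theorem regIncBeta_one_sub {x : ℝ} (hx : x ∈ Icc (0 : ℝ) 1) :
    regIncBeta b a (1 - x) = 1 - regIncBeta a b x := by
  have reflected : regIncBeta b a (1 - x) = ∫ t in Ioc x 1, betaPDF a b t := by
    rw [regIncBeta, ← intervalIntegral.integral_of_le (sub_nonneg.2 hx.2),
      ← intervalIntegral.integral_of_le hx.2]
    simpa only [betaPDF_one_sub, sub_sub_cancel, sub_zero] using
      intervalIntegral.integral_comp_sub_left (a := 0) (b := 1 - x) (betaPDF a b) 1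
  have split : regIncBeta a b 1 = regIncBeta a b x + ∫ t in Ioc x 1, betaPDF a b t := by
    simp only [regIncBeta]
    rw [← setIntegral_union (Ioc_disjoint_Ioc_of_le le_rfl) measurableSet_Ioc
      ((integrableOn_betaPDF ha hb).mono_set (Ioc_subset_Ioc_right hx.2))
      ((integrableOn_betaPDF ha hb).mono_set (Ioc_subset_Ioc_left hx.1)),
      Ioc_union_Ioc_eq_Ioc hx.1 hx.2]
  rw [reflected, eq_sub_iff_add_eq', ← split, regIncBeta_one ha hb]

end RegularizedIncompleteBeta

section Statistics

variable {n : ℕ} {u v : Fin n → ℝ}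

theorem natCast_sub_finVal_pos (i : Fin n) : (0 : ℝ) < n - (i : ℕ) :=
  sub_pos.2 (Nat.cast_lt.2 i.2)

theorem natCast_finVal_rev_add_one (i : Fin n) : ((i.rev : ℕ) : ℝ) + 1 = n - (i : ℕ) := by
  rw [Fin.val_rev, Nat.cast_sub i.2]
  push_cast
  ring

theorem pOrd_le_pOrd (huv : u ≤ v) (hv : ∀ i, v i ≤ 1) (i : Fin n) : pOrd u i ≤ pOrd v i :=
  have stat_le := orderStat_mono i huv
  have stat_le_one : orderStat v i ≤ 1 := hv _
  regIncBeta_monotoneOn (Nat.cast_add_one_pos _) (natCast_sub_finVal_pos i)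
    (stat_le.trans stat_le_one) stat_le_one stat_le

theorem pOrd_one_sub (hu : ∀ i, u i ∈ Icc (0 : ℝ) 1) (i : Fin n) :
    pOrd (fun j ↦ 1 - u j) i = 1 - pOrd u i.rev := by
  have stat_eq : orderStat (fun j ↦ 1 - u j) i = 1 - orderStat u i.rev :=
    orderStat_comp_antitone (fun _ _ hxy ↦ sub_le_sub_left hxy 1) u i
  have fst_eq : ((i : ℕ) : ℝ) + 1 = n - (i.rev : ℕ) := by
    rw [← natCast_finVal_rev_add_one, Fin.rev_rev]
  rw [pOrd, pOrd, stat_eq, fst_eq, ← natCast_finVal_rev_add_one i]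
  exact regIncBeta_one_sub (Nat.cast_add_one_pos _) (natCast_sub_finVal_pos _) (hu _)

theorem MnPlus_le_MnPlus (huv : u ≤ v) (hv : ∀ i, v i ≤ 1) : MnPlus u ≤ MnPlus v :=
  ciInf_mono (finite_range _).bddBelow (pOrd_le_pOrd huv hv)

theorem MnPlus_one_sub (hu : ∀ i, u i ∈ Icc (0 : ℝ) 1) :
    MnPlus (fun j ↦ 1 - u j) = MnMinus u := by
  simp only [MnPlus, MnMinus, pOrd_one_sub hu]
  exact Fin.revPerm.iInf_comp (g := fun i ↦ 1 - pOrd u i)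

theorem measurable_pOrd (i : Fin n) : Measurable fun u : Fin n → ℝ ↦ pOrd u i :=
  (measurable_regIncBeta _ _).comp (measurable_orderStat i)

theorem measurable_MnPlus : Measurable (MnPlus : (Fin n → ℝ) → ℝ) :=
  Measurable.iInf measurable_pOrd

theorem measurable_Mn : Measurable (Mn : (Fin n → ℝ) → ℝ) :=
  measurable_MnPlus.min (Measurable.iInf fun i ↦ (measurable_pOrd i).const_sub 1)

end Statistics

theorem nullMeasure_apply {n : ℕ} {s : Set (Fin n → ℝ)} (hs : MeasurableSet s) :
    nullMeasure n s = volume {u : Fin n → I | (fun i ↦ (u i : ℝ)) ∈ s} := by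
  have coe_preserving :
      MeasurePreserving (fun (u : Fin n → I) i ↦ (u i : ℝ)) volume (nullMeasure n) :=
    measurePreserving_pi _ _ fun _ ↦ unitInterval.measurePreserving_coe
  exact (coe_preserving.measure_preimage hs.nullMeasurableSet).symm

theorem berk_jones_two_sided_p_value_bounds_general {n : ℕ} {P : Measure (Fin n → I)}
    [IsProbabilityMeasure P] (hP : PositivelyAssociated P)
    (hσ : MeasurePreserving (fun u i ↦ σ (u i)) P P) (c : ℝ) :
    2 * P.real {u | MnPlus (fun i ↦ (u i : ℝ)) ≤ c} -
        P.real {u | MnPlus (fun i ↦ (u i : ℝ)) ≤ c} ^ 2 ≤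
      P.real {u | Mn (fun i ↦ (u i : ℝ)) ≤ c} ∧
    P.real {u | Mn (fun i ↦ (u i : ℝ)) ≤ c} ≤
      2 * P.real {u | MnPlus (fun i ↦ (u i : ℝ)) ≤ c} := by
  set A : Set (Fin n → I) := {u | MnPlus (fun i ↦ (u i : ℝ)) ≤ c}
  have twoSided_eq : {u : Fin n → I | Mn (fun i ↦ (u i : ℝ)) ≤ c} =
      A ∪ (fun u i ↦ σ (u i)) ⁻¹' A := by
    ext u
    have reflect := MnPlus_one_sub fun i ↦ (u i).2
    simp only [A, Mn, min_le_iff, ← reflect, mem_union, mem_preimage, mem_ofPred_eq, coe_symm_eq]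
  have A_meas : MeasurableSet A :=
    measurableSet_le (measurable_MnPlus.comp (by fun_prop)) measurable_const
  have A_lower : IsLowerSet A := fun v u huv hv ↦ (MnPlus_le_MnPlus huv fun i ↦ (v i).2.2).trans hv
  have reflect_anti : Antitone fun (u : Fin n → I) i ↦ σ (u i) :=
    fun u v huv i ↦ symm_le_symm.2 (huv i)
  rw [twoSided_eq]
  refine ⟨hP.two_mul_sub_sq_le_measureReal_union_preimage hσ reflect_anti A_meas A_lower, ?_⟩
  calc P.real (A ∪ (fun u i ↦ σ (u i)) ⁻¹' A)
      ≤ P.real A + P.real ((fun u i ↦ σ (u i)) ⁻¹' A) := measureReal_union_le _ _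
    _ = 2 * P.real A := by rw [hσ.measureReal_preimage A_meas.nullMeasurableSet, two_mul]

theorem berk_jones_two_sided_p_value_bounds (n : ℕ) (hn : 0 < n)
    (c : ℝ) (hc : c ∈ Set.Icc (0:ℝ) 1) :
    2 * ((nullMeasure n) {u | MnPlus u ≤ c}).toReal -
        (((nullMeasure n) {u | MnPlus u ≤ c}).toReal) ^ 2 ≤
      ((nullMeasure n) {u | Mn u ≤ c}).toReal ∧
    ((nullMeasure n) {u | Mn u ≤ c}).toReal ≤
      2 * ((nullMeasure n) {u | MnPlus u ≤ c}).toReal := by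
  rw [nullMeasure_apply (measurableSet_le measurable_MnPlus measurable_const),
    nullMeasure_apply (measurableSet_le measurable_Mn measurable_const)]
  exact berk_jones_two_sided_p_value_bounds_general (.pi fun _ ↦ .of_total _)
    (volume_preserving_pi fun _ ↦ unitInterval.measurePreserving_symm) c
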